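/- Let C ⊂ ℝ^{n+d} be a convex body, S = C ∩ (ℤⁿ × ℝ^d), and K = proj_{ℝⁿ}(C). Suppose z₀ + k·B∞ⁿ ⊆ K for some z₀ ∈ ℝⁿ and k ≥ (3e/2)(n+d). Then there exists y* ∈ S such that for every closed halfspace H ⊆ ℝ^{n+d} with y* ∈ H, H_d(S ∩ H) ≥ (1/e − 3(n+d)/(2k)) · H_d(S). -/

import Mathlib

open MeasureTheory Set
open scoped ENNReal

/-- The mixed-integer volume `H_d(A) = Σ_{z ∈ ℤⁿ} vol_d(A_z)`. -/
noncomputable def mixVol (n d : ℕ) (A : Set ((Fin n → ℝ) × (Fin d → ℝ))) : ℝ≥0∞ :=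
  ∑' z : Fin n → ℤ, volume {x : Fin d → ℝ | ((fun i => (z i : ℝ)), x) ∈ A}

/-- The mixed-integer lattice `ℤⁿ × ℝ^d` as a subset of `ℝⁿ × ℝ^d`. -/
def mixLattice (n d : ℕ) : Set ((Fin n → ℝ) × (Fin d → ℝ)) :=
  {p | ∃ z : Fin n → ℤ, p.1 = fun i => (z i : ℝ)}

/-- The standard bilinear pairing on `ℝⁿ × ℝ^d`. -/
def dotP (n d : ℕ) (a y : (Fin n → ℝ) × (Fin d → ℝ)) : ℝ :=
  (∑ i, a.1 i * y.1 i) + ∑ j, a.2 j * y.2 j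

/-- The mixed-integer halfspace depth of a point `y` with respect to `S`:
the infimum of `H_d(S ∩ H)` over closed halfspaces `H` containing `y`. -/
noncomputable def depth (n d : ℕ) (S : Set ((Fin n → ℝ) × (Fin d → ℝ)))
    (y : (Fin n → ℝ) × (Fin d → ℝ)) : ℝ≥0∞ :=
  ⨅ (a : (Fin n → ℝ) × (Fin d → ℝ)) (c : ℝ) (_ : a ≠ 0) (_ : c ≤ dotP n d a y),
    mixVol n d (S ∩ {u | c ≤ dotP n d a u})

/-
By Prékopa–Leindler the tail `t ↦ μ (C ∩ {t ≤ f})` of a linear functional `f` on a convex body is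
log-concave. If `G` is the tail function of a random variable `X`, then `𝔼[-log G(X)] ≤ 1`, so by
convexity of `-log G` one gets `G(𝔼 X) ≥ 1/e`: every halfspace through the centroid contains at
least `1/e` of the volume (Grünbaum). Contracting the superlevel sets of `±f` towards the extreme
points of `C` shows that a thin slab has small volume, so a halfspace which misses the centroid
slightly still has almost `1/e` of the volume.

With `m = 1 / (2k)`, the projection of `m • C` to `ℝⁿ` contains a unit cube, so a Minkowski sum with
`m • C` absorbs the rounding of the first coordinate to `ℤⁿ`. Hence `H_d(C)` is at most the volume
of `(1 + m) • C`, and `H_d(C ∩ H)` is at least the volume of `(1 - m) • A` whenever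
`(1 - m) • A + m • C ⊆ C ∩ H`.
-/

open scoped Pointwise

section PrekopaLeindler

theorem volume_add_le_volume_add_of_isCompact {A B : Set ℝ} (hA : IsCompact A) (hB : IsCompact B)
    (hA₀ : A.Nonempty) (hB₀ : B.Nonempty) : volume A + volume B ≤ volume (A + B) := by
  obtain ⟨a, ha, ha_max⟩ := hA.exists_isGreatest hA₀
  obtain ⟨b, hb, hb_min⟩ := hB.exists_isLeast hB₀
  have hdisj : AEDisjoint volume (b +ᵥ A) (a +ᵥ B) := by
    refine measure_mono_null (t := {a + b}) ?_ (by simp)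
    rintro _ ⟨⟨x, hx, rfl⟩, y, hy, hxy⟩
    have := ha_max hx
    have := hb_min hy
    simp only [vadd_eq_add, mem_singleton_iff] at hxy ⊢
    linarith
  calc volume A + volume B = volume ((b +ᵥ A) ∪ (a +ᵥ B)) := by
        rw [measure_union₀ (hB.vadd a).measurableSet.nullMeasurableSet hdisj, measure_vadd,
          measure_vadd]
    _ ≤ volume (A + B) := by
        refine measure_mono (union_subset ?_ ?_)
        · rintro _ ⟨x, hx, rfl⟩
          simpa only [vadd_eq_add, add_comm] using add_mem_add hx hb
        · rintro _ ⟨y, hy, rfl⟩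
          exact add_mem_add ha hy

theorem volume_add_le_volume_add {A B : Set ℝ} (hA : MeasurableSet A) (hB : MeasurableSet B)
    (hA₀ : A.Nonempty) (hB₀ : B.Nonempty) : volume A + volume B ≤ volume (A + B) := by
  obtain ⟨a, ha⟩ := hA₀
  obtain ⟨b, hb⟩ := hB₀
  have hcompact : ∀ K, (K ⊆ A ∧ IsCompact K) → ∀ L, (L ⊆ B ∧ IsCompact L) →
      volume K + volume L ≤ volume (A + B) := by
    rintro K ⟨hKA, hK⟩ L ⟨hLB, hL⟩
    calc volume K + volume L ≤ volume (insert a K) + volume (insert b L) := by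
          gcongr <;> exact subset_insert _ _
      _ ≤ volume (insert a K + insert b L) :=
          volume_add_le_volume_add_of_isCompact (hK.insert a) (hL.insert b)
            (insert_nonempty a K) (insert_nonempty b L)
      _ ≤ volume (A + B) :=
          measure_mono (add_subset_add (insert_subset ha hKA) (insert_subset hb hLB))
  rw [hA.measure_eq_iSup_isCompact, hB.measure_eq_iSup_isCompact]
  simp_rw [iSup_and']
  exact ENNReal.biSup_add_biSup_le' ⟨∅, by simp⟩ ⟨∅, by simp⟩ hcompact

theorem ofReal_mul_volume_add_le_volume_smul_add_smul {A B : Set ℝ} (hA : MeasurableSet A)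
    (hB : MeasurableSet B) (hA₀ : A.Nonempty) (hB₀ : B.Nonempty) {a b : ℝ} (ha : 0 ≤ a)
    (hb : 0 ≤ b) :
    ENNReal.ofReal a * volume A + ENNReal.ofReal b * volume B ≤ volume (a • A + b • B) := by
  simpa [-Measure.addHaar_smul, Measure.addHaar_smul_of_nonneg, ha, hb] using
    volume_add_le_volume_add (hA.const_smul₀ a) (hB.const_smul₀ b) hA₀.smul_set hB₀.smul_set

theorem lintegral_eq_lintegral_measure_ofReal_lt {α : Type*} [MeasurableSpace α] (μ : Measure α)
    {f : α → ℝ≥0∞} (hf : Measurable f) (hfin : ∀ x, f x ≠ ∞) :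
    ∫⁻ x, f x ∂μ = ∫⁻ t in Ioi (0 : ℝ), μ {x | ENNReal.ofReal t < f x} := by
  calc ∫⁻ x, f x ∂μ = ∫⁻ x, ENNReal.ofReal (f x).toReal ∂μ := by
        simp only [ENNReal.ofReal_toReal (hfin _)]
    _ = ∫⁻ t in Ioi (0 : ℝ), μ {x | t < (f x).toReal} :=
        lintegral_eq_lintegral_meas_lt _ (ae_of_all _ fun _ => ENNReal.toReal_nonneg)
          hf.ennreal_toReal.aemeasurable
    _ = ∫⁻ t in Ioi (0 : ℝ), μ {x | ENNReal.ofReal t < f x} := by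
        refine setLIntegral_congr_fun measurableSet_Ioi fun t ht => ?_
        simp only [ENNReal.ofReal_lt_iff_lt_toReal (le_of_lt ht) (hfin _)]

theorem ofReal_mul_volume_lt_add_le {a b : ℝ} (ha : 0 < a) (hb : 0 < b) (hab : a + b = 1)
    {f g h : ℝ → ℝ≥0∞} (hf : Measurable f) (hg : Measurable g)
    (hfgh : ∀ x y, f x ^ a * g y ^ b ≤ h (a * x + b * y)) {t : ℝ≥0∞} (hft : ∃ x, t < f x)
    (hgt : ∃ y, t < g y) :
    ENNReal.ofReal a * volume {x | t < f x} + ENNReal.ofReal b * volume {x | t < g x} ≤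
      volume {x | t < h x} := by
  refine (ofReal_mul_volume_add_le_volume_smul_add_smul (measurableSet_lt measurable_const hf)
    (measurableSet_lt measurable_const hg) hft hgt ha.le hb.le).trans (measure_mono ?_)
  rintro _ ⟨_, ⟨x, hx, rfl⟩, _, ⟨y, hy, rfl⟩, rfl⟩
  calc t = t ^ a * t ^ b := by
        rw [← ENNReal.rpow_add_of_nonneg _ _ ha.le hb.le, hab, ENNReal.rpow_one]
    _ < f x ^ a * g y ^ b :=
        ENNReal.mul_lt_mul (ENNReal.rpow_lt_rpow hx ha) (ENNReal.rpow_lt_rpow hy hb)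
    _ ≤ h (a * x + b * y) := hfgh x y

theorem ofReal_mul_lintegral_add_le_of_iSup_eq_one {a b : ℝ} (ha : 0 < a) (hb : 0 < b)
    (hab : a + b = 1) {f g h : ℝ → ℝ≥0∞} (hf : Measurable f) (hg : Measurable g)
    (hh : Measurable h) (hf₁ : ⨆ x, f x = 1) (hg₁ : ⨆ x, g x = 1)
    (hfgh : ∀ x y, f x ^ a * g y ^ b ≤ h (a * x + b * y)) :
    ENNReal.ofReal a * (∫⁻ x, f x) + ENNReal.ofReal b * (∫⁻ x, g x) ≤ ∫⁻ x, h x := by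
  have hfgh₁ x y : f x ^ a * g y ^ b ≤ min (h (a * x + b * y)) 1 :=
    le_min (hfgh x y) (mul_le_one' (ENNReal.rpow_le_one (hf₁ ▸ le_iSup f x) ha.le)
      (ENNReal.rpow_le_one (hg₁ ▸ le_iSup g y) hb.le))
  have hmeas (u : ℝ → ℝ≥0∞) : Measurable fun t : ℝ => volume {x | ENNReal.ofReal t < u x} :=
    Antitone.measurable fun s t hst => measure_mono fun x hx =>
      (ENNReal.ofReal_le_ofReal hst).trans_lt hx
  have hlayer {u : ℝ → ℝ≥0∞} (hu : Measurable u) (hu₁ : ∀ x, u x ≤ 1) :=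
    lintegral_eq_lintegral_measure_ofReal_lt volume hu fun x =>
      ne_top_of_le_ne_top ENNReal.one_ne_top (hu₁ x)
  have hlevel (t : ℝ) : ENNReal.ofReal a * volume {x | ENNReal.ofReal t < f x} +
      ENNReal.ofReal b * volume {x | ENNReal.ofReal t < g x} ≤
        volume {x | ENNReal.ofReal t < min (h x) 1} := by
    rcases lt_or_ge (ENNReal.ofReal t) 1 with ht | ht
    · exact ofReal_mul_volume_lt_add_le ha hb hab hf hg hfgh₁ (lt_iSup_iff.1 (hf₁.symm ▸ ht))
        (lt_iSup_iff.1 (hg₁.symm ▸ ht))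
    · have hempty {u : ℝ → ℝ≥0∞} (hu : ⨆ x, u x = 1) : {x | ENNReal.ofReal t < u x} = ∅ :=
        eq_empty_of_forall_notMem fun x hx => ((le_iSup u x).trans (hu.trans_le ht)).not_gt hx
      simp only [hempty hf₁, hempty hg₁, measure_empty, mul_zero, add_zero, zero_le]
  calc ENNReal.ofReal a * (∫⁻ x, f x) + ENNReal.ofReal b * (∫⁻ x, g x)
      = ∫⁻ t in Ioi (0 : ℝ), ENNReal.ofReal a * volume {x | ENNReal.ofReal t < f x} +
          ENNReal.ofReal b * volume {x | ENNReal.ofReal t < g x} := by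
        rw [lintegral_add_left ((hmeas f).const_mul _), lintegral_const_mul _ (hmeas f),
          lintegral_const_mul _ (hmeas g), hlayer hf fun x => hf₁ ▸ le_iSup f x,
          hlayer hg fun x => hg₁ ▸ le_iSup g x]
    _ ≤ ∫⁻ t in Ioi (0 : ℝ), volume {x | ENNReal.ofReal t < min (h x) 1} :=
        lintegral_mono hlevel
    _ = ∫⁻ x, min (h x) 1 := (hlayer (hh.min measurable_const) fun _ => min_le_right _ _).symm
    _ ≤ ∫⁻ x, h x := lintegral_mono fun x => min_le_left _ _

theorem rpow_mul_rpow_le_ofReal_mul_add {a b : ℝ} (ha : 0 < a) (hb : 0 < b) (hab : a + b = 1)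
    (x y : ℝ≥0∞) : x ^ a * y ^ b ≤ ENNReal.ofReal a * x + ENNReal.ofReal b * y := by
  have := ENNReal.young_inequality (x ^ a) (y ^ b) (Real.HolderConjugate.inv_inv ha hb hab)
  rwa [ENNReal.rpow_rpow_inv ha.ne', ENNReal.rpow_rpow_inv hb.ne', ENNReal.ofReal_inv_of_pos ha,
    ENNReal.ofReal_inv_of_pos hb, div_eq_mul_inv, div_eq_mul_inv, inv_inv, inv_inv, mul_comm x,
    mul_comm y] at this

theorem div_rpow_mul_div_rpow {a b : ℝ} (ha : 0 < a) (hb : 0 < b) (x y : ℝ≥0∞) {F : ℝ≥0∞}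
    (G : ℝ≥0∞) (hF₀ : F ≠ 0) (hF : F ≠ ∞) :
    (x / F) ^ a * (y / G) ^ b = x ^ a * y ^ b / (F ^ a * G ^ b) := by
  rw [ENNReal.div_rpow_of_nonneg _ _ ha.le, ENNReal.div_rpow_of_nonneg _ _ hb.le,
    ENNReal.mul_div_mul_comm (Or.inl (by simp [hF₀, hF]))
      (Or.inl (ENNReal.rpow_ne_top_of_nonneg ha.le hF))]

theorem lintegral_rpow_mul_lintegral_rpow_le_of_iSup_ne_top {a b : ℝ} (ha : 0 < a) (hb : 0 < b)
    (hab : a + b = 1) {f g h : ℝ → ℝ≥0∞} (hf : Measurable f) (hg : Measurable g)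
    (hh : Measurable h) (hf_top : ⨆ x, f x ≠ ∞) (hg_top : ⨆ x, g x ≠ ∞)
    (hfgh : ∀ x y, f x ^ a * g y ^ b ≤ h (a * x + b * y)) :
    (∫⁻ x, f x) ^ a * (∫⁻ x, g x) ^ b ≤ ∫⁻ x, h x := by
  rcases eq_or_ne (⨆ x, f x) 0 with hf₀ | hf₀
  · simp only [ENNReal.iSup_eq_zero.1 hf₀, lintegral_zero, ENNReal.zero_rpow_of_pos ha, zero_mul,
      zero_le]
  rcases eq_or_ne (⨆ x, g x) 0 with hg₀ | hg₀
  · simp only [ENNReal.iSup_eq_zero.1 hg₀, lintegral_zero, ENNReal.zero_rpow_of_pos hb, mul_zero,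
      zero_le]
  generalize hF : ⨆ x, f x = F at hf_top hf₀
  generalize hG : ⨆ x, g x = G at hg_top hg₀
  have hdiv x y := div_rpow_mul_div_rpow ha hb x y G hf₀ hf_top
  have hscaled : (∫⁻ x, f x) ^ a * (∫⁻ x, g x) ^ b / (F ^ a * G ^ b) ≤
      (∫⁻ x, h x) / (F ^ a * G ^ b) :=
    calc (∫⁻ x, f x) ^ a * (∫⁻ x, g x) ^ b / (F ^ a * G ^ b)
        = (∫⁻ x, f x / F) ^ a * (∫⁻ x, g x / G) ^ b := by
          rw [← hdiv]
          simp only [div_eq_mul_inv, lintegral_mul_const _ hf, lintegral_mul_const _ hg]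
      _ ≤ ENNReal.ofReal a * (∫⁻ x, f x / F) + ENNReal.ofReal b * (∫⁻ x, g x / G) :=
          rpow_mul_rpow_le_ofReal_mul_add ha hb hab _ _
      _ ≤ ∫⁻ x, h x / (F ^ a * G ^ b) := by
          refine ofReal_mul_lintegral_add_le_of_iSup_eq_one ha hb hab (hf.div_const F)
            (hg.div_const G) (hh.div_const _) ?_ ?_ fun x y => ?_
          · rw [← ENNReal.iSup_div, hF, ENNReal.div_self hf₀ hf_top]
          · rw [← ENNReal.iSup_div, hG, ENNReal.div_self hg₀ hg_top]
          · exact (hdiv _ _).trans_le (ENNReal.div_le_div_right (hfgh x y) _)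
      _ = (∫⁻ x, h x) / (F ^ a * G ^ b) := by simp only [div_eq_mul_inv, lintegral_mul_const _ hh]
  refine (ENNReal.mul_le_mul_iff_left ?_ ?_).1 hscaled
  · simp [hf_top, hg_top, ha.le, hb.le, ENNReal.mul_eq_top]
  · simp [hf₀, hg₀, hf_top, hg_top]

theorem lintegral_eq_iSup_lintegral_min_natCast {α : Type*} [MeasurableSpace α] (μ : Measure α)
    {f : α → ℝ≥0∞} (hf : Measurable f) : ∫⁻ x, f x ∂μ = ⨆ n : ℕ, ∫⁻ x, min (f x) n ∂μ := by
  rw [← lintegral_iSup (fun n => hf.min measurable_const) fun m n hmn x =>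
    min_le_min_left _ (Nat.mono_cast hmn)]
  simp only [← inf_iSup_eq, ENNReal.iSup_natCast, inf_top_eq]

/-- The Prékopa–Leindler inequality for `μ`, as a predicate: it is established for every Haar
measure of a finite-dimensional space through its stability under products and linear
isomorphisms. The functions take values in `ℝ≥0∞`, so only measurability is required of them. -/
def SatisfiesPrekopaLeindler {E : Type*} [AddCommGroup E] [Module ℝ E] [MeasurableSpace E]
    (μ : Measure E) : Prop :=
  ∀ ⦃a b : ℝ⦄, 0 < a → 0 < b → a + b = 1 → ∀ ⦃f g h : E → ℝ≥0∞⦄, Measurable f → Measurable g →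
    Measurable h → (∀ x y, f x ^ a * g y ^ b ≤ h (a • x + b • y)) →
      (∫⁻ x, f x ∂μ) ^ a * (∫⁻ x, g x ∂μ) ^ b ≤ ∫⁻ x, h x ∂μ

theorem satisfiesPrekopaLeindler_real : SatisfiesPrekopaLeindler (volume : Measure ℝ) := by
  intro a b ha hb hab f g h hf hg hh hfgh
  have hmin_top (u : ℝ → ℝ≥0∞) (m : ℕ) : ⨆ x, min (u x) m ≠ ∞ :=
    ne_top_of_le_ne_top (ENNReal.natCast_ne_top m) (iSup_le fun _ => min_le_right _ _)
  have htrunc (m n : ℕ) : (∫⁻ x, min (f x) m) ^ a * (∫⁻ x, min (g x) n) ^ b ≤ ∫⁻ x, h x :=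
    lintegral_rpow_mul_lintegral_rpow_le_of_iSup_ne_top ha hb hab (hf.min measurable_const)
      (hg.min measurable_const) hh (hmin_top f m) (hmin_top g n) fun x y =>
      (mul_le_mul' (ENNReal.rpow_le_rpow (min_le_left _ _) ha.le)
        (ENNReal.rpow_le_rpow (min_le_left _ _) hb.le)).trans (hfgh x y)
  have hrpow {c : ℝ} (hc : 0 < c) (u : ℕ → ℝ≥0∞) : (⨆ n, u n) ^ c = ⨆ n, u n ^ c :=
    (ENNReal.orderIsoRpow c hc).map_iSup u
  rw [lintegral_eq_iSup_lintegral_min_natCast _ hf, lintegral_eq_iSup_lintegral_min_natCast _ hg,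
    hrpow ha, hrpow hb, ENNReal.iSup_mul]
  simpa only [ENNReal.mul_iSup, iSup_le_iff] using htrunc

namespace SatisfiesPrekopaLeindler

variable {E F : Type*} [AddCommGroup E] [Module ℝ E] [MeasurableSpace E]
  [AddCommGroup F] [Module ℝ F] [MeasurableSpace F] {μ : Measure E} {ν : Measure F}

theorem of_unique [Unique E] (μ : Measure E) : SatisfiesPrekopaLeindler μ := by
  intro a b ha hb hab f g h _ _ _ hfgh
  simp only [lintegral_unique]
  calc (f default * μ univ) ^ a * (g default * μ univ) ^ b
      = f default ^ a * g default ^ b * (μ univ ^ a * μ univ ^ b) := by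
        rw [ENNReal.mul_rpow_of_nonneg _ _ ha.le, ENNReal.mul_rpow_of_nonneg _ _ hb.le,
          mul_mul_mul_comm]
    _ = f default ^ a * g default ^ b * μ univ := by
        rw [← ENNReal.rpow_add_of_nonneg _ _ ha.le hb.le, hab, ENNReal.rpow_one]
    _ ≤ h default * μ univ :=
        mul_le_mul_left ((hfgh default default).trans_eq (congrArg h (Subsingleton.elim _ _))) _

theorem smul (hμ : SatisfiesPrekopaLeindler μ) (c : ℝ≥0∞) : SatisfiesPrekopaLeindler (c • μ) := by
  intro a b ha hb hab f g h hf hg hh hfgh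
  simp only [lintegral_smul_measure, smul_eq_mul]
  calc (c * ∫⁻ x, f x ∂μ) ^ a * (c * ∫⁻ x, g x ∂μ) ^ b
      = c ^ a * c ^ b * ((∫⁻ x, f x ∂μ) ^ a * (∫⁻ x, g x ∂μ) ^ b) := by
        rw [ENNReal.mul_rpow_of_nonneg _ _ ha.le, ENNReal.mul_rpow_of_nonneg _ _ hb.le,
          mul_mul_mul_comm]
    _ = c * ((∫⁻ x, f x ∂μ) ^ a * (∫⁻ x, g x ∂μ) ^ b) := by
        rw [← ENNReal.rpow_add_of_nonneg _ _ ha.le hb.le, hab, ENNReal.rpow_one]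
    _ ≤ c * ∫⁻ x, h x ∂μ := mul_le_mul_right (hμ ha hb hab hf hg hh hfgh) c

theorem prod [SFinite ν] (hμ : SatisfiesPrekopaLeindler μ) (hν : SatisfiesPrekopaLeindler ν) :
    SatisfiesPrekopaLeindler (μ.prod ν) := by
  intro a b ha hb hab f g h hf hg hh hfgh
  rw [lintegral_prod _ hf.aemeasurable, lintegral_prod _ hg.aemeasurable,
    lintegral_prod _ hh.aemeasurable]
  refine hμ ha hb hab hf.lintegral_prod_right' hg.lintegral_prod_right' hh.lintegral_prod_right'
    fun x y => ?_
  exact hν ha hb hab (hf.comp measurable_prodMk_left) (hg.comp measurable_prodMk_left)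
    (hh.comp measurable_prodMk_left) fun u v => hfgh (x, u) (y, v)

end SatisfiesPrekopaLeindler

section FiniteDimensional

variable {E F : Type*} [NormedAddCommGroup E] [NormedSpace ℝ E] [FiniteDimensional ℝ E]
  [MeasurableSpace E] [BorelSpace E] [NormedAddCommGroup F] [NormedSpace ℝ F]
  [MeasurableSpace F] [BorelSpace F]

theorem SatisfiesPrekopaLeindler.of_continuousLinearEquiv {ν : Measure F} [ν.IsAddHaarMeasure]
    (hν : SatisfiesPrekopaLeindler ν) (e : F ≃L[ℝ] E) (μ : Measure E) [μ.IsAddHaarMeasure] :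
    SatisfiesPrekopaLeindler μ := by
  have := e.isAddHaarMeasure_map ν
  rw [Measure.isAddLeftInvariant_eq_smul μ (ν.map e)]
  refine SatisfiesPrekopaLeindler.smul ?_ _
  intro a b ha hb hab f g h hf hg hh hfgh
  have hmeas : Measurable e := e.continuous.measurable
  rw [lintegral_map hf hmeas, lintegral_map hg hmeas, lintegral_map hh hmeas]
  exact hν ha hb hab (hf.comp hmeas) (hg.comp hmeas) (hh.comp hmeas) fun x y => by
    simpa only [Function.comp_apply, map_add, map_smul] using hfgh (e x) (e y)

theorem satisfiesPrekopaLeindler_fin (n : ℕ) :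
    SatisfiesPrekopaLeindler (volume : Measure (Fin n → ℝ)) := by
  induction n with
  | zero => exact .of_unique _
  | succ n ih =>
    exact (satisfiesPrekopaLeindler_real.prod ih).of_continuousLinearEquiv
      (.ofFinrankEq (by simp [add_comm])) _

theorem satisfiesPrekopaLeindler_of_isAddHaarMeasure (μ : Measure E) [μ.IsAddHaarMeasure] :
    SatisfiesPrekopaLeindler μ :=
  (satisfiesPrekopaLeindler_fin (Module.finrank ℝ E)).of_continuousLinearEquiv
    (.ofFinrankEq (by simp)) μ

theorem measure_rpow_mul_measure_rpow_le (μ : Measure E) [μ.IsAddHaarMeasure] {a b : ℝ}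
    (ha : 0 < a) (hb : 0 < b) (hab : a + b = 1) {A B M : Set E} (hA : MeasurableSet A)
    (hB : MeasurableSet B) (hABM : a • A + b • B ⊆ M) : μ A ^ a * μ B ^ b ≤ μ M := by
  have hM := measurableSet_toMeasurable μ M
  rw [← measure_toMeasurable M, ← lintegral_indicator_one hA, ← lintegral_indicator_one hB,
    ← lintegral_indicator_one hM]
  refine satisfiesPrekopaLeindler_of_isAddHaarMeasure μ ha hb hab (measurable_const.indicator hA)
    (measurable_const.indicator hB) (measurable_const.indicator hM) fun x y => ?_
  by_cases hx : x ∈ A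
  · by_cases hy : y ∈ B
    · have hxy : a • x + b • y ∈ toMeasurable μ M := subset_toMeasurable μ M
        (hABM (add_mem_add (smul_mem_smul_set hx) (smul_mem_smul_set hy)))
      simp [hx, hy, hxy]
    · simp [hy, hb]
  · simp [hx, ha]

end FiniteDimensional

end PrekopaLeindler

section Grunbaum

theorem measure_setOf_measure_Ici_le (ν : Measure ℝ) [IsFiniteMeasure ν] (u : ℝ≥0∞) :
    ν {t | ν (Ici t) ≤ u} ≤ u := by
  have hmeas : MeasurableSet {t | ν (Ici t) ≤ u} :=
    measurableSet_le (Antitone.measurable fun s t hst => measure_mono (Ici_subset_Ici.2 hst))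
      measurable_const
  rw [hmeas.measure_eq_iSup_isCompact]
  refine iSup₂_le fun K hKu => iSup_le fun hK => ?_
  rcases K.eq_empty_or_nonempty with rfl | hK₀
  · simp
  · obtain ⟨t, htK, ht⟩ := hK.exists_isLeast hK₀
    exact (measure_mono ht).trans (hKu htK)

theorem lintegral_neg_log_measure_Ici_le_one (ν : Measure ℝ) [IsProbabilityMeasure ν] :
    ∫⁻ t, ENNReal.ofReal (-Real.log (ν.real (Ici t))) ∂ν ≤ 1 := by
  have hanti : Antitone fun t => ν.real (Ici t) := fun s t hst =>
    measureReal_mono (Ici_subset_Ici.2 hst)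
  calc ∫⁻ t, ENNReal.ofReal (-Real.log (ν.real (Ici t))) ∂ν
      = ∫⁻ s in Ioi (0 : ℝ), ν {t | s ≤ -Real.log (ν.real (Ici t))} :=
        lintegral_eq_lintegral_meas_le _
          (ae_of_all _ fun t => neg_nonneg.2 (Real.log_nonpos measureReal_nonneg
            measureReal_le_one)) hanti.measurable.log.neg.aemeasurable
    _ ≤ ∫⁻ s in Ioi (0 : ℝ), ENNReal.ofReal (Real.exp (-s)) := by
        refine setLIntegral_mono (by fun_prop) fun s hs => ?_
        refine (measure_mono fun t ht => ?_).trans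
          (measure_setOf_measure_Ici_le ν (ENNReal.ofReal (Real.exp (-s))))
        have hlog : Real.log (ν.real (Ici t)) ≤ -s := le_neg.1 ht
        have hpos : 0 < ν.real (Ici t) := by
          refine measureReal_nonneg.lt_of_ne fun h₀ => ?_
          rw [← h₀, Real.log_zero] at hlog
          linarith [mem_Ioi.1 hs]
        rw [mem_ofPred_eq, ← ofReal_measureReal]
        exact ENNReal.ofReal_le_ofReal ((Real.log_le_iff_le_exp hpos).1 hlog)
    _ = 1 := by
        rw [← ofReal_integral_eq_lintegral_ofReal (integrableOn_exp_neg_Ioi 0)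
          (ae_of_all _ fun _ => (Real.exp_pos _).le), integral_exp_neg_Ioi_zero,
          ENNReal.ofReal_one]

theorem exists_affine_le_of_mem_interior {S : Set ℝ} {φ : ℝ → ℝ} (hφ : ConvexOn ℝ S φ) {x : ℝ}
    (hx : x ∈ interior S) : ∃ σ, ∀ y ∈ S, φ x + σ * (y - x) ≤ φ y := by
  refine ⟨derivWithin φ (Iio x) x, fun y hy => ?_⟩
  rcases lt_trichotomy y x with hyx | rfl | hxy
  · have hslope := hφ.slope_le_leftDeriv_of_mem_interior hy hx hyx
    rw [slope_def_field, div_le_iff₀ (sub_pos.2 hyx)] at hslope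
    linarith
  · simp
  · have hslope := (hφ.leftDeriv_le_rightDeriv_of_mem_interior hx).trans
      (hφ.rightDeriv_le_slope_of_mem_interior hx hy hxy)
    rw [slope_def_field, le_div_iff₀ (sub_pos.2 hxy)] at hslope
    linarith

theorem exp_neg_one_le_measureReal_Ici_integral {ν : Measure ℝ} [IsProbabilityMeasure ν]
    (hint : Integrable (fun t => t) ν) {M : ℝ} (hM : ∀ᵐ t ∂ν, t < M)
    (hconv : ConvexOn ℝ (Iio M) fun t => -Real.log (ν.real (Ici t))) :
    Real.exp (-1) ≤ ν.real (Ici (∫ t, t ∂ν)) := by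
  set φ : ℝ → ℝ := fun t => -Real.log (ν.real (Ici t))
  set τ := ∫ t, t ∂ν
  have hpos : 0 < ν (Ici τ) := measure_integral_le_pos hint
  have hτM : τ < M := by
    obtain ⟨t, hτt, htM⟩ := ((frequently_ae_mem_iff.2 hpos.ne').and_eventually hM).exists
    exact lt_of_le_of_lt hτt htM
  have hφ₀ t : 0 ≤ φ t := neg_nonneg.2 (Real.log_nonpos measureReal_nonneg measureReal_le_one)
  have hφ_meas : Measurable φ := (Antitone.measurable fun s t hst =>
    measureReal_mono (Ici_subset_Ici.2 hst)).log.neg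
  have hφ_lint := lintegral_neg_log_measure_Ici_le_one ν
  have hφ_int : Integrable φ ν := ⟨hφ_meas.aestronglyMeasurable,
    (hasFiniteIntegral_iff_ofReal (ae_of_all _ hφ₀)).2 (hφ_lint.trans_lt ENNReal.one_lt_top)⟩
  obtain ⟨σ, hσ⟩ := exists_affine_le_of_mem_interior hconv
    (x := τ) (by rwa [interior_Iio])
  have haff_int : Integrable (fun t => σ * (t - τ)) ν :=
    (hint.sub (integrable_const τ)).const_mul σ
  have hφτ : φ τ ≤ 1 :=
    calc φ τ = ∫ t, φ τ + σ * (t - τ) ∂ν := by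
          rw [integral_add (integrable_const _) haff_int, integral_const_mul,
            integral_sub hint (integrable_const τ)]
          simp [τ]
      _ ≤ ∫ t, φ t ∂ν := integral_mono_ae ((integrable_const _).add haff_int) hφ_int
          (hM.mono hσ)
      _ ≤ 1 := by
          rw [integral_eq_lintegral_of_nonneg_ae (ae_of_all _ hφ₀) hφ_meas.aestronglyMeasurable]
          exact ENNReal.toReal_le_of_le_ofReal zero_le_one (by simpa using hφ_lint)
  exact (Real.le_log_iff_exp_le (ENNReal.toReal_pos hpos.ne' (measure_ne_top _ _))).1
    (neg_le.1 hφτ)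

end Grunbaum

section CentroidDepth

theorem one_le_finrank_of_ne_zero {E : Type*} [NormedAddCommGroup E] [NormedSpace ℝ E]
    [FiniteDimensional ℝ E] {f : E →L[ℝ] ℝ} (hf : f ≠ 0) : (1 : ℝ) ≤ Module.finrank ℝ E := by
  obtain ⟨x, hx⟩ := DFunLike.ne_iff.1 hf
  have := nontrivial_of_ne x 0 fun h => hx (by simp [h])
  exact_mod_cast Module.finrank_pos (R := ℝ) (M := E)

theorem image_homothety_inter_Ici_subset {E : Type*} [AddCommGroup E] [Module ℝ E] {C : Set E}
    (hC : Convex ℝ C) (f : E →ₗ[ℝ] ℝ) {q : E} (hq : q ∈ C) {s l : ℝ} (hl₀ : 0 ≤ l) (hl₁ : l ≤ 1) :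
    AffineMap.homothety q (1 - l) '' (C ∩ f ⁻¹' Ici s) ⊆
      C ∩ f ⁻¹' Ici (s + l * (f q - s)) := by
  rintro _ ⟨x, ⟨hxC, hsx⟩, rfl⟩
  have hx : AffineMap.homothety q (1 - l) x = (1 - l) • x + l • q := by
    rw [AffineMap.homothety_apply, vsub_eq_sub, vadd_eq_add]
    module
  rw [hx]
  refine ⟨hC hxC hq (sub_nonneg.2 hl₁) hl₀ (sub_add_cancel _ _), ?_⟩
  have := mul_le_mul_of_nonneg_left (mem_Ici.1 hsx) (sub_nonneg.2 hl₁)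
  simp only [mem_preimage, mem_Ici, map_add, map_smul, smul_eq_mul]
  linarith

variable {E : Type*} [NormedAddCommGroup E] [NormedSpace ℝ E] [FiniteDimensional ℝ E]
  [MeasurableSpace E] [BorelSpace E] (μ : Measure E) [μ.IsAddHaarMeasure]

theorem measure_level_eq_zero {f : E →L[ℝ] ℝ} (hf : f ≠ 0) (c : ℝ) : μ {x | f x = c} = 0 := by
  obtain ⟨x₀, rfl⟩ : ∃ x₀, f x₀ = c := (f : E →ₗ[ℝ] ℝ).surjective (mod_cast hf) c
  have hlevel : {x | f x = f x₀} = AffineSubspace.mk' x₀ f.ker := by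
    ext x
    simp [AffineSubspace.mem_mk', sub_eq_zero]
  rw [hlevel]
  refine Measure.addHaar_affineSubspace μ _ fun htop => hf ?_
  have hdir := congrArg AffineSubspace.direction htop
  rw [AffineSubspace.direction_mk', AffineSubspace.direction_top] at hdir
  exact ContinuousLinearMap.ext fun x => (hdir ▸ Submodule.mem_top : x ∈ f.ker)

theorem measure_inter_Ici_rpow_mul_le {C : Set E} (hC : Convex ℝ C) (hCm : MeasurableSet C)
    (f : E →L[ℝ] ℝ) {a b : ℝ} (ha : 0 < a) (hb : 0 < b) (hab : a + b = 1) (s t : ℝ) :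
    μ (C ∩ f ⁻¹' Ici s) ^ a * μ (C ∩ f ⁻¹' Ici t) ^ b ≤ μ (C ∩ f ⁻¹' Ici (a * s + b * t)) := by
  have hmeas r : MeasurableSet (C ∩ f ⁻¹' Ici r) :=
    hCm.inter (measurableSet_Ici.preimage f.measurable)
  refine measure_rpow_mul_measure_rpow_le μ ha hb hab (hmeas s) (hmeas t) ?_
  rintro _ ⟨_, ⟨x, ⟨hxC, hsx⟩, rfl⟩, _, ⟨y, ⟨hyC, hty⟩, rfl⟩, rfl⟩
  refine ⟨hC hxC hyC ha.le hb.le hab, ?_⟩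
  simp only [mem_preimage, mem_Ici, map_add, map_smul, smul_eq_mul] at hsx hty ⊢
  gcongr

theorem measure_inter_Ici_pos {C : Set E} (hC : Convex ℝ C) (hμC : μ C ≠ 0) (f : E →L[ℝ] ℝ)
    {q : E} (hq : q ∈ C) {t : ℝ} (ht : t < f q) : 0 < μ (C ∩ f ⁻¹' Ici t) := by
  have hint : (interior C).Nonempty := by
    by_contra hempty
    rw [not_nonempty_iff_eq_empty] at hempty
    refine hμC (measure_mono_null (fun x hx => ?_) (hC.addHaar_frontier μ))
    exact ⟨subset_closure hx, hempty ▸ notMem_empty x⟩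
  have hopen : IsOpen (interior C ∩ f ⁻¹' Ioi t) :=
    isOpen_interior.inter (isOpen_Ioi.preimage f.continuous)
  refine (hopen.measure_pos μ ?_).trans_le
    (measure_mono (inter_subset_inter interior_subset (preimage_mono Ioi_subset_Ici_self)))
  have hq_closure : q ∈ closure (interior C) :=
    hC.closure_interior_eq_closure_of_nonempty_interior hint ▸ subset_closure hq
  rw [inter_comm]
  exact mem_closure_iff.1 hq_closure _ (isOpen_Ioi.preimage f.continuous) ht

theorem convexOn_neg_log_map_restrict_Ici {C : Set E} (hC : Convex ℝ C) (hCc : IsCompact C)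
    (hμC : μ C ≠ 0) (f : E →L[ℝ] ℝ) {q : E} (hq : q ∈ C) :
    ConvexOn ℝ (Iio (f q)) fun t => -Real.log (((μ.restrict C).map f).real (Ici t)) := by
  have htail t : ((μ.restrict C).map f).real (Ici t) = (μ (C ∩ f ⁻¹' Ici t)).toReal := by
    rw [measureReal_def, Measure.map_apply f.measurable measurableSet_Ici,
      Measure.restrict_apply (measurableSet_Ici.preimage f.measurable), inter_comm]
  have hfin t : μ (C ∩ f ⁻¹' Ici t) ≠ ∞ :=
    measure_ne_top_of_subset inter_subset_left hCc.measure_ne_top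
  have hpos {t} (ht : t ∈ Iio (f q)) : 0 < (μ (C ∩ f ⁻¹' Ici t)).toReal :=
    ENNReal.toReal_pos (measure_inter_Ici_pos μ hC hμC f hq ht).ne' (hfin t)
  simp only [htail]
  refine convexOn_iff_forall_pos.2 ⟨convex_Iio _, fun s hs t ht a b ha hb hab => ?_⟩
  have hBM := ENNReal.toReal_mono (hfin _)
    (measure_inter_Ici_rpow_mul_le μ hC hCc.measurableSet f ha hb hab s t)
  rw [ENNReal.toReal_mul, ← ENNReal.toReal_rpow, ← ENNReal.toReal_rpow] at hBM
  have hlog := Real.log_le_log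
    (mul_pos (Real.rpow_pos_of_pos (hpos hs) a) (Real.rpow_pos_of_pos (hpos ht) b)) hBM
  rw [Real.log_mul (Real.rpow_pos_of_pos (hpos hs) a).ne' (Real.rpow_pos_of_pos (hpos ht) b).ne',
    Real.log_rpow (hpos hs), Real.log_rpow (hpos ht)] at hlog
  simp only [smul_eq_mul]
  linarith

theorem exp_neg_one_le_measureReal_inter_of_measure_eq_one {C : Set E} (hC : Convex ℝ C)
    (hCc : IsCompact C) (hμC : μ C = 1) {f : E →L[ℝ] ℝ} (hf : f ≠ 0) :
    Real.exp (-1) ≤ μ.real (C ∩ f ⁻¹' Ici (f (∫ y in C, y ∂μ))) := by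
  have : IsProbabilityMeasure (μ.restrict C) := ⟨by rw [Measure.restrict_apply_univ, hμC]⟩
  have : IsProbabilityMeasure ((μ.restrict C).map f) :=
    Measure.isProbabilityMeasure_map f.measurable.aemeasurable
  have hint : Integrable (fun x => x) (μ.restrict C) := continuousOn_id.integrableOn_compact hCc
  obtain ⟨q, hq, hq_max⟩ := hCc.exists_isMaxOn
    (nonempty_of_measure_ne_zero (hμC.trans_ne one_ne_zero)) f.continuous.continuousOn
  have hlt : ∀ᵐ t ∂((μ.restrict C).map f), t < f q := by
    rw [ae_map_iff f.measurable.aemeasurable measurableSet_Iio]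
    filter_upwards [ae_restrict_mem hCc.measurableSet,
      ae_restrict_of_ae (measure_eq_zero_iff_ae_notMem.1 (measure_level_eq_zero μ hf (f q)))]
      with x hxC hx
    exact lt_of_le_of_ne (hq_max hxC) hx
  have hmean : ∫ t, t ∂((μ.restrict C).map f) = f (∫ y in C, y ∂μ) := by
    rw [integral_map f.measurable.aemeasurable (by fun_prop)]
    exact f.integral_comp_comm hint
  have hgrunbaum := exp_neg_one_le_measureReal_Ici_integral
    ((integrable_map_measure (by fun_prop) f.measurable.aemeasurable).2
      (f.integrable_comp hint)) hlt
    (convexOn_neg_log_map_restrict_Ici μ hC hCc (hμC.trans_ne one_ne_zero) f hq)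
  rwa [hmean, map_measureReal_apply f.measurable measurableSet_Ici,
    measureReal_restrict_apply (measurableSet_Ici.preimage f.measurable), inter_comm] at hgrunbaum

theorem exp_neg_one_mul_measureReal_le_measureReal_inter {C : Set E} (hC : Convex ℝ C)
    (hCc : IsCompact C) {f : E →L[ℝ] ℝ} (hf : f ≠ 0) :
    Real.exp (-1) * μ.real C ≤ μ.real (C ∩ f ⁻¹' Ici (f (⨍ y in C, y ∂μ))) := by
  rcases eq_or_ne (μ C) 0 with hμC | hμC
  · simp [measureReal_def, hμC]
  have hμC_top : μ C ≠ ∞ := hCc.measure_ne_top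
  have hμC_pos : 0 < μ.real C := ENNReal.toReal_pos hμC hμC_top
  have : ((μ C)⁻¹ • μ).IsAddHaarMeasure := .smul μ (by simpa) (by simpa)
  have hnormalized := exp_neg_one_le_measureReal_inter_of_measure_eq_one ((μ C)⁻¹ • μ) hC hCc
    (by simp [ENNReal.inv_mul_cancel hμC hμC_top]) hf
  rwa [Measure.restrict_smul, integral_smul_measure, ENNReal.toReal_inv, ← measureReal_def,
    ← setAverage_eq, measureReal_ennreal_smul_apply, ENNReal.toReal_inv, ← measureReal_def,
    le_inv_mul_iff₀' hμC_pos] at hnormalized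

theorem one_sub_mul_measureReal_inter_Ici_le {C : Set E} (hC : Convex ℝ C) (hCc : IsCompact C)
    (f : E →L[ℝ] ℝ) {q : E} (hq : q ∈ C) (s : ℝ) {l : ℝ} (hl₀ : 0 ≤ l) (hl₁ : l ≤ 1) :
    (1 - Module.finrank ℝ E * l) * μ.real (C ∩ f ⁻¹' Ici s) ≤
      μ.real (C ∩ f ⁻¹' Ici (s + l * (f q - s))) := by
  calc (1 - Module.finrank ℝ E * l) * μ.real (C ∩ f ⁻¹' Ici s)
      ≤ (1 - l) ^ Module.finrank ℝ E * μ.real (C ∩ f ⁻¹' Ici s) := by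
        gcongr
        simpa [sub_eq_add_neg] using
          one_add_mul_le_pow (show -2 ≤ -l by linarith) (Module.finrank ℝ E)
    _ = μ.real (AffineMap.homothety q (1 - l) '' (C ∩ f ⁻¹' Ici s)) := by
        rw [measureReal_def, measureReal_def, Measure.addHaar_image_homothety, ENNReal.toReal_mul,
          ENNReal.toReal_ofReal (abs_nonneg _), abs_of_nonneg (pow_nonneg (sub_nonneg.2 hl₁) _)]
    _ ≤ μ.real (C ∩ f ⁻¹' Ici (s + l * (f q - s))) :=
        measureReal_mono (image_homothety_inter_Ici_subset hC (f : E →ₗ[ℝ] ℝ) hq hl₀ hl₁)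
          (measure_ne_top_of_subset inter_subset_left hCc.measure_ne_top)

theorem measureReal_inter_Ici_sub_mul_le {C : Set E} (hC : Convex ℝ C) (hCc : IsCompact C)
    {f : E →L[ℝ] ℝ} (hf : f ≠ 0) {q : E} (hq : q ∈ C) {s t : ℝ} (hst : s ≤ t) (hsq : s ≤ f q) :
    (μ.real (C ∩ f ⁻¹' Ici s) - μ.real (C ∩ f ⁻¹' Ici t)) * (f q - s) ≤
      Module.finrank ℝ E * (t - s) * μ.real (C ∩ f ⁻¹' Ici s) := by
  rcases lt_or_ge t (f q) with htq | htq
  · have hpos : 0 < f q - s := sub_pos.2 (hst.trans_lt htq)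
    have hle := one_sub_mul_measureReal_inter_Ici_le μ hC hCc f hq s
      (div_nonneg (sub_nonneg.2 hst) hpos.le) ((div_le_one hpos).2 (by linarith))
    rw [div_mul_cancel₀ _ hpos.ne', add_sub_cancel] at hle
    calc (μ.real (C ∩ f ⁻¹' Ici s) - μ.real (C ∩ f ⁻¹' Ici t)) * (f q - s)
        ≤ Module.finrank ℝ E * ((t - s) / (f q - s)) * μ.real (C ∩ f ⁻¹' Ici s) * (f q - s) := by
          gcongr
          linarith
      _ = Module.finrank ℝ E * (t - s) * μ.real (C ∩ f ⁻¹' Ici s) := by field_simp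
  · have hfinrank := one_le_finrank_of_ne_zero hf
    calc (μ.real (C ∩ f ⁻¹' Ici s) - μ.real (C ∩ f ⁻¹' Ici t)) * (f q - s)
        ≤ μ.real (C ∩ f ⁻¹' Ici s) * (t - s) := by
          gcongr
          exact sub_le_self _ measureReal_nonneg
      _ ≤ Module.finrank ℝ E * (t - s) * μ.real (C ∩ f ⁻¹' Ici s) := by
          nlinarith [mul_nonneg (sub_nonneg.2 hst) (measureReal_nonneg (μ := μ)
            (s := C ∩ f ⁻¹' Ici s))]

theorem measureReal_inter_Ici_add_measureReal_inter_Iic {C : Set E} (hC : MeasurableSet C)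
    (hμC : μ C ≠ ∞) {f : E →L[ℝ] ℝ} (hf : f ≠ 0) (t : ℝ) :
    μ.real (C ∩ f ⁻¹' Ici t) + μ.real (C ∩ f ⁻¹' Iic t) = μ.real C := by
  have hnull : AEDisjoint μ (C ∩ f ⁻¹' Ici t) (C ∩ f ⁻¹' Iic t) :=
    measure_mono_null (fun x hx => le_antisymm hx.2.2 hx.1.2) (measure_level_eq_zero μ hf t)
  rw [← measureReal_union₀ (hC.inter (measurableSet_Iic.preimage f.measurable)).nullMeasurableSet
    hnull (measure_ne_top_of_subset inter_subset_left hμC)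
    (measure_ne_top_of_subset inter_subset_left hμC), ← inter_union_distrib_left,
    ← preimage_union, union_comm, Iic_union_Ici, preimage_univ, inter_univ]

theorem measureReal_slab_mul_le {C : Set E} (hC : Convex ℝ C) (hCc : IsCompact C)
    {f : E →L[ℝ] ℝ} (hf : f ≠ 0) {p q : E} (hp : p ∈ C) (hq : q ∈ C) {s t : ℝ} (hst : s ≤ t)
    (hpt : f p ≤ t) (hsq : s ≤ f q) :
    (μ.real (C ∩ f ⁻¹' Ici s) - μ.real (C ∩ f ⁻¹' Ici t)) * (f q - f p + (t - s)) ≤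
      2 * Module.finrank ℝ E * (t - s) * μ.real C := by
  have hC_top : μ C ≠ ∞ := hCc.measure_ne_top
  have hupper := measureReal_inter_Ici_sub_mul_le μ hC hCc hf hq hst hsq
  have hlower := measureReal_inter_Ici_sub_mul_le μ hC hCc (neg_ne_zero.2 hf) hp
    (neg_le_neg hst) (neg_le_neg hpt)
  have hneg (r : ℝ) : ⇑(-f) ⁻¹' Ici (-r) = f ⁻¹' Iic r := by ext x; simp
  rw [hneg, hneg, neg_apply] at hlower
  have hs := measureReal_inter_Ici_add_measureReal_inter_Iic μ hCc.measurableSet hC_top hf s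
  have ht := measureReal_inter_Ici_add_measureReal_inter_Iic μ hCc.measurableSet hC_top hf t
  have hslab : μ.real (C ∩ f ⁻¹' Iic t) - μ.real (C ∩ f ⁻¹' Iic s) =
      μ.real (C ∩ f ⁻¹' Ici s) - μ.real (C ∩ f ⁻¹' Ici t) := by linarith
  rw [hslab] at hlower
  have hs_le : μ.real (C ∩ f ⁻¹' Ici s) ≤ μ.real C := measureReal_mono inter_subset_left hC_top
  have ht_le : μ.real (C ∩ f ⁻¹' Iic t) ≤ μ.real C := measureReal_mono inter_subset_left hC_top
  calc (μ.real (C ∩ f ⁻¹' Ici s) - μ.real (C ∩ f ⁻¹' Ici t)) * (f q - f p + (t - s))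
      ≤ Module.finrank ℝ E * (t - s) *
          (μ.real (C ∩ f ⁻¹' Ici s) + μ.real (C ∩ f ⁻¹' Iic t)) := by linarith
    _ ≤ Module.finrank ℝ E * (t - s) * (μ.real C + μ.real C) := by gcongr
    _ = 2 * Module.finrank ℝ E * (t - s) * μ.real C := by ring

/- `δ` is the shift for which `(1 - m) • {x | f y + δ ≤ f x} + m • C` stays above the level of every
point `(1 - m) • y + m • v` with `v ∈ C`. -/
theorem exists_forall_ofReal_mul_measure_le_measure_inter_Ici {C : Set E} (hC : Convex ℝ C)
    (hCc : IsCompact C) (hC₀ : C.Nonempty) :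
    ∃ y ∈ C, ∀ f : E →L[ℝ] ℝ, f ≠ 0 → ∀ p ∈ C, (∀ x ∈ C, f p ≤ f x) → ∀ q ∈ C,
      (∀ x ∈ C, f x ≤ f q) → ∀ m δ : ℝ, 0 ≤ m → m < 1 → (1 - m) * δ = m * (f q - f p) →
        ENNReal.ofReal (Real.exp (-1) - 2 * Module.finrank ℝ E * m) * μ C ≤
          μ (C ∩ f ⁻¹' Ici (f y + δ)) := by
  rcases eq_or_ne (μ C) 0 with hμC | hμC
  · obtain ⟨y, hy⟩ := hC₀
    exact ⟨y, hy, fun _ _ _ _ _ _ _ _ _ _ _ _ _ => by simp [hμC]⟩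
  have hC_top : μ C ≠ ∞ := hCc.measure_ne_top
  have hy : ⨍ x in C, x ∂μ ∈ C := hC.set_average_mem hCc.isClosed hμC hC_top
    (ae_restrict_mem hCc.measurableSet) (continuousOn_id.integrableOn_compact hCc)
  refine ⟨_, hy, fun f hf p hp hp_min q hq hq_max m δ hm₀ hm₁ hδ => ?_⟩
  set y := ⨍ x in C, x ∂μ
  have hW : 0 ≤ f q - f p := sub_nonneg.2 (hp_min q hq)
  have hδ₀ : 0 ≤ δ := nonneg_of_mul_nonneg_right (hδ ▸ mul_nonneg hm₀ hW) (sub_pos.2 hm₁)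
  have hslab := measureReal_slab_mul_le μ hC hCc hf hp hq (le_add_of_nonneg_right hδ₀)
    ((hp_min y hy).trans (le_add_of_nonneg_right hδ₀)) (hq_max y hy)
  have hgrunbaum := exp_neg_one_mul_measureReal_le_measureReal_inter μ hC hCc hf
  have hdepth : (Real.exp (-1) - 2 * Module.finrank ℝ E * m) * μ.real C ≤
      μ.real (C ∩ f ⁻¹' Ici (f y + δ)) := by
    rcases (add_nonneg hW hδ₀).eq_or_lt with hzero | hpos
    · have hδ_zero : δ = 0 := by linarith
      rw [hδ_zero, add_zero]
      refine le_trans (mul_le_mul_of_nonneg_right ?_ measureReal_nonneg) hgrunbaum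
      exact sub_le_self _ (by positivity)
    · have hslab_le : μ.real (C ∩ f ⁻¹' Ici (f y)) - μ.real (C ∩ f ⁻¹' Ici (f y + δ)) ≤
          2 * Module.finrank ℝ E * m * μ.real C := by
        refine le_of_mul_le_mul_right ?_ hpos
        linear_combination hslab + (2 * Module.finrank ℝ E * μ.real C) * hδ
      linarith
  rw [← ofReal_measureReal hC_top, ← ENNReal.ofReal_mul' measureReal_nonneg,
    ← ofReal_measureReal (measure_ne_top_of_subset inter_subset_left hC_top)]
  exact ENNReal.ofReal_le_ofReal hdepth

end CentroidDepth

section LatticeTransfer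

variable {ι F : Type*}

theorem measurable_pi_round : Measurable fun (w : ι → ℝ) i => round (w i) := by
  simp only [round_eq]
  fun_prop

/-- The mixed-integer volume of `A ⊆ ℝ^ι × F` with respect to a measure `ν` on the continuous
factor `F`: the total `ν`-measure of the slices of `A` over `ℤ^ι`. -/
noncomputable def latticeSliceMeasure [MeasurableSpace F] (ν : Measure F)
    (A : Set ((ι → ℝ) × F)) : ℝ≥0∞ :=
  ∑' z : ι → ℤ, ν (Prod.mk (fun i => (z i : ℝ)) ⁻¹' A)

theorem latticeSliceMeasure_mono [MeasurableSpace F] (ν : Measure F)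
    {A B : Set ((ι → ℝ) × F)} (hAB : A ⊆ B) :
    latticeSliceMeasure ν A ≤ latticeSliceMeasure ν B :=
  ENNReal.tsum_le_tsum fun _ => measure_mono (preimage_mono hAB)

variable [Fintype ι]

theorem dist_round_le_half (w : ι → ℝ) : dist (fun i => (round (w i) : ℝ)) w ≤ 1 / 2 := by
  refine (dist_pi_le_iff (by norm_num)).2 fun i => ?_
  rw [dist_comm, Real.dist_eq]
  exact abs_sub_round (w i)

theorem volume_map_pi_round :
    (volume : Measure (ι → ℝ)).map (fun w i => round (w i)) = Measure.count := by
  refine Measure.ext_of_singleton fun z => ?_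
  have hcell : (fun (w : ι → ℝ) i => round (w i)) ⁻¹' {z} =
      univ.pi fun i => Ico ((z i : ℝ) - 1 / 2) (z i + 1 / 2) := by
    ext w
    simp only [mem_preimage, mem_singleton_iff, funext_iff, round_eq, Int.floor_eq_iff, mem_univ_pi,
      mem_Ico]
    exact forall_congr' fun i => by constructor <;> rintro ⟨_, _⟩ <;> constructor <;> linarith
  rw [Measure.map_apply measurable_pi_round (measurableSet_singleton z), hcell,
    Measure.count_singleton, Real.volume_pi_Ico]
  simp only [add_sub_sub_cancel, add_halves, ENNReal.ofReal_one, Finset.prod_const_one]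

theorem lintegral_comp_pi_round (φ : (ι → ℤ) → ℝ≥0∞) :
    ∫⁻ w : ι → ℝ, φ (fun i => round (w i)) = ∑' z, φ z := by
  rw [← lintegral_count, ← volume_map_pi_round,
    lintegral_map (measurable_of_countable φ) measurable_pi_round]

variable {A B D : Set ((ι → ℝ) × F)} {w₀ : ι → ℝ}

theorem exists_add_snd_mem [Add F] (hB : Metric.closedBall w₀ (1 / 2) ⊆ Prod.fst '' B)
    (hABD : A + B ⊆ D) {u v : ι → ℝ} (huv : dist v (u + w₀) ≤ 1 / 2) :
    ∃ g : F, ∀ x, (u, x) ∈ A → (v, x + g) ∈ D := by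
  obtain ⟨⟨b, g⟩, hb, hbv⟩ : v - u ∈ Prod.fst '' B := hB (by
    rwa [Metric.mem_closedBall, dist_eq_norm, sub_sub, ← dist_eq_norm])
  refine ⟨g, fun x hx => hABD ⟨_, hx, _, hb, ?_⟩⟩
  change (u + b, x + g) = (v, x + g)
  rw [show b = v - u from hbv, add_sub_cancel]

theorem exists_mem_add_fst_eq_intCast (hB : Metric.closedBall w₀ (1 / 2) ⊆ Prod.fst '' B)
    (u : ι → ℝ) : ∃ b ∈ B, ∃ z : ι → ℤ, u + b.1 = fun i => (z i : ℝ) := by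
  obtain ⟨b, hb, hbu⟩ := hB (show (fun i => (round ((u + w₀) i) : ℝ)) - u ∈ _ by
    rw [Metric.mem_closedBall, dist_eq_norm, sub_sub, ← dist_eq_norm]
    exact dist_round_le_half (u + w₀))
  exact ⟨b, hb, _, by rw [hbu, add_sub_cancel]⟩

theorem latticeSliceMeasure_le_prod [AddGroup F] [MeasurableSpace F] [MeasurableAdd F]
    (ν : Measure F) [SFinite ν] [ν.IsAddRightInvariant]
    (hB : Metric.closedBall w₀ (1 / 2) ⊆ Prod.fst '' B) (hABD : A + B ⊆ D)
    (hD : MeasurableSet D) : latticeSliceMeasure ν A ≤ (volume.prod ν) D := by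
  rw [latticeSliceMeasure, ← lintegral_comp_pi_round, Measure.prod_apply hD,
    ← lintegral_add_right_eq_self (fun w => ν (Prod.mk w ⁻¹' D)) w₀]
  refine lintegral_mono fun w => ?_
  obtain ⟨g, hg⟩ := exists_add_snd_mem hB hABD (u := fun i => (round (w i) : ℝ)) (v := w + w₀)
    (by rw [dist_add_right, dist_comm]; exact dist_round_le_half w)
  calc ν (Prod.mk (fun i => (round (w i) : ℝ)) ⁻¹' A)
      ≤ ν ((· + g) ⁻¹' (Prod.mk (w + w₀) ⁻¹' D)) := measure_mono fun x hx => hg x hx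
    _ = ν (Prod.mk (w + w₀) ⁻¹' D) := measure_preimage_add_right ν g _

theorem prod_le_latticeSliceMeasure [AddGroup F] [MeasurableSpace F] [MeasurableAdd F]
    (ν : Measure F) [SFinite ν] [ν.IsAddRightInvariant]
    (hB : Metric.closedBall w₀ (1 / 2) ⊆ Prod.fst '' B) (hABD : A + B ⊆ D)
    (hA : MeasurableSet A) : (volume.prod ν) A ≤ latticeSliceMeasure ν D := by
  rw [latticeSliceMeasure, ← lintegral_comp_pi_round, Measure.prod_apply hA,
    ← lintegral_sub_right_eq_self _ w₀]
  refine lintegral_mono fun w => ?_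
  obtain ⟨g, hg⟩ := exists_add_snd_mem hB hABD (u := w - w₀) (v := fun i => (round (w i) : ℝ))
    (by rw [sub_add_cancel]; exact dist_round_le_half w)
  calc ν (Prod.mk (w - w₀) ⁻¹' A)
      ≤ ν ((· + g) ⁻¹' (Prod.mk (fun i => (round (w i) : ℝ)) ⁻¹' D)) :=
        measure_mono fun x hx => hg x hx
    _ = ν (Prod.mk (fun i => (round (w i) : ℝ)) ⁻¹' D) := measure_preimage_add_right ν g _

end LatticeTransfer

section Threshold

variable {ι F : Type*} [Fintype ι] [NormedAddCommGroup F] [NormedSpace ℝ F]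

theorem smul_inter_Ici_add_smul_subset {E : Type*} [AddCommGroup E] [Module ℝ E] {C : Set E}
    (hC : Convex ℝ C) (f : E →ₗ[ℝ] ℝ) {p q : E} (hp : ∀ x ∈ C, f p ≤ f x)
    (hq : ∀ x ∈ C, f x ≤ f q) {m δ : ℝ} (hm₀ : 0 ≤ m) (hm₁ : m ≤ 1)
    (hδ : (1 - m) * δ = m * (f q - f p)) (y : E) {v : E} (hv : v ∈ C) :
    (1 - m) • (C ∩ f ⁻¹' Ici (f y + δ)) + m • C ⊆ C ∩ f ⁻¹' Ici (f ((1 - m) • y + m • v)) := by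
  rintro _ ⟨_, ⟨x, ⟨hxC, hx⟩, rfl⟩, _, ⟨w, hw, rfl⟩, rfl⟩
  refine ⟨hC hxC hw (sub_nonneg.2 hm₁) hm₀ (sub_add_cancel 1 m), ?_⟩
  simp only [mem_preimage, mem_Ici, map_add, map_smul, smul_eq_mul] at hx ⊢
  calc (1 - m) * f y + m * f v ≤ (1 - m) * f y + m * f q := by gcongr; exact hq v hv
    _ = (1 - m) * (f y + δ) + m * f p := by linear_combination -hδ
    _ ≤ (1 - m) * f x + m * f w := by
      gcongr
      exact hp w hw

theorem sub_mul_one_add_pow_le {N : ℕ} {m r : ℝ} (hm₀ : 0 ≤ m) (hm₁ : m ≤ 1 / 2)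
    (hr : r ≤ 1 / 2) (hmr : 3 * N * m ≤ r) :
    (r - 3 * N * m) * (1 + m) ^ N ≤ (1 - m) ^ N * (r - 2 * N * m) := by
  have hbernoulli : 1 - 2 * N * m ≤ (1 - 2 * m) ^ N := by
    have := one_add_mul_le_pow (show -2 ≤ -(2 * m) by linarith) N
    rw [← sub_eq_add_neg] at this
    linarith
  have hNm : 0 ≤ N * m := by positivity
  calc (r - 3 * N * m) * (1 + m) ^ N
      ≤ ((1 - 2 * m) ^ N * (r - 2 * N * m)) * (1 + m) ^ N := by
        gcongr
        nlinarith [mul_le_mul_of_nonneg_right hbernoulli (show 0 ≤ r - 2 * N * m by linarith)]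
    _ = ((1 - 2 * m) * (1 + m)) ^ N * (r - 2 * N * m) := by rw [mul_pow]; ring
    _ ≤ (1 - m) ^ N * (r - 2 * N * m) := by
        gcongr
        · linarith
        · nlinarith
        · nlinarith

variable [FiniteDimensional ℝ F] [MeasurableSpace F] [BorelSpace F] (ν : Measure F)
  [ν.IsAddHaarMeasure] {C : Set ((ι → ℝ) × F)} {w₀ : ι → ℝ} {m : ℝ}

theorem latticeSliceMeasure_le_one_add_pow_mul (hC : Convex ℝ C) (hCc : IsCompact C) (hm : 0 ≤ m)
    (hbox : Metric.closedBall w₀ (1 / 2) ⊆ Prod.fst '' (m • C)) :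
    latticeSliceMeasure ν C ≤
      ENNReal.ofReal ((1 + m) ^ Module.finrank ℝ ((ι → ℝ) × F)) * (volume.prod ν) C := by
  rw [← Measure.addHaar_smul_of_nonneg _ (by positivity)]
  refine latticeSliceMeasure_le_prod ν hbox ?_ (hCc.smul (1 + m)).measurableSet
  rw [hC.add_smul zero_le_one hm, one_smul]

theorem ofReal_mul_latticeSliceMeasure_le (hC : Convex ℝ C) (hCc : IsCompact C) (hm₀ : 0 ≤ m)
    (hm₁ : m ≤ 1 / 2) (hbox : Metric.closedBall w₀ (1 / 2) ⊆ Prod.fst '' (m • C)) {r : ℝ}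
    (hr : r ≤ 1 / 2) (hmr : 3 * Module.finrank ℝ ((ι → ℝ) × F) * m ≤ r)
    {A D : Set ((ι → ℝ) × F)} (hA : IsCompact A) (hAD : (1 - m) • A + m • C ⊆ D)
    (hCA : ENNReal.ofReal (r - 2 * Module.finrank ℝ ((ι → ℝ) × F) * m) * (volume.prod ν) C ≤
      (volume.prod ν) A) :
    ENNReal.ofReal (r - 3 * Module.finrank ℝ ((ι → ℝ) × F) * m) * latticeSliceMeasure ν C ≤
      latticeSliceMeasure ν D := by
  have hm : 0 ≤ 1 - m := by linarith
  set N := Module.finrank ℝ ((ι → ℝ) × F)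
  set μ : Measure ((ι → ℝ) × F) := volume.prod ν
  calc ENNReal.ofReal (r - 3 * N * m) * latticeSliceMeasure ν C
      ≤ ENNReal.ofReal (r - 3 * N * m) * (ENNReal.ofReal ((1 + m) ^ N) * μ C) := by
        gcongr
        exact latticeSliceMeasure_le_one_add_pow_mul ν hC hCc hm₀ hbox
    _ = ENNReal.ofReal ((r - 3 * N * m) * (1 + m) ^ N) * μ C := by
        rw [← mul_assoc, ENNReal.ofReal_mul (sub_nonneg.2 hmr)]
    _ ≤ ENNReal.ofReal ((1 - m) ^ N * (r - 2 * N * m)) * μ C :=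
        mul_le_mul_left (ENNReal.ofReal_le_ofReal (sub_mul_one_add_pow_le hm₀ hm₁ hr hmr)) _
    _ = ENNReal.ofReal ((1 - m) ^ N) * (ENNReal.ofReal (r - 2 * N * m) * μ C) := by
        rw [← mul_assoc, ENNReal.ofReal_mul (pow_nonneg hm N)]
    _ ≤ ENNReal.ofReal ((1 - m) ^ N) * μ A := by gcongr
    _ = μ ((1 - m) • A) := (Measure.addHaar_smul_of_nonneg μ hm A).symm
    _ ≤ latticeSliceMeasure ν D :=
        prod_le_latticeSliceMeasure ν hbox hAD (hA.smul (1 - m)).measurableSet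

theorem exists_forall_latticeSliceMeasure_inter_le (hC : Convex ℝ C) (hCc : IsCompact C)
    (hm₀ : 0 ≤ m) (hm₁ : m ≤ 1) (hbox : Metric.closedBall w₀ (1 / 2) ⊆ Prod.fst '' (m • C)) :
    ∃ y ∈ C, (∃ z : ι → ℤ, y.1 = fun i => (z i : ℝ)) ∧
      ∀ f : (ι → ℝ) × F →L[ℝ] ℝ, f ≠ 0 →
        ENNReal.ofReal (Real.exp (-1) - 3 * Module.finrank ℝ ((ι → ℝ) × F) * m) *
            latticeSliceMeasure ν C ≤
          latticeSliceMeasure ν (C ∩ f ⁻¹' Ici (f y)) := by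
  have hC₀ : C.Nonempty := smul_set_nonempty.1 <| image_nonempty.1 <|
    (Metric.nonempty_closedBall.2 (by norm_num)).mono hbox
  obtain ⟨y, hy, hdepth⟩ :=
    exists_forall_ofReal_mul_measure_le_measure_inter_Ici (volume.prod ν) hC hCc hC₀
  obtain ⟨_, ⟨v, hv, rfl⟩, z, hz⟩ := exists_mem_add_fst_eq_intCast hbox ((1 - m) • y.1)
  refine ⟨(1 - m) • y + m • v, hC hy hv (sub_nonneg.2 hm₁) hm₀ (sub_add_cancel 1 m), ⟨z, hz⟩,
    fun f hf => ?_⟩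
  rcases le_or_gt (Real.exp (-1)) (3 * Module.finrank ℝ ((ι → ℝ) × F) * m) with hbig | hsmall
  · rw [ENNReal.ofReal_of_nonpos (sub_nonpos.2 hbig), zero_mul]
    exact zero_le
  have hm_half : m ≤ 1 / 2 := by
    have := mul_le_mul_of_nonneg_right (one_le_finrank_of_ne_zero hf) hm₀
    linarith [Real.exp_neg_one_lt_half]
  obtain ⟨p, hp, hp_min⟩ := hCc.exists_isMinOn hC₀ f.continuous.continuousOn
  obtain ⟨q, hq, hq_max⟩ := hCc.exists_isMaxOn hC₀ f.continuous.continuousOn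
  obtain ⟨δ, hδ⟩ : ∃ δ, (1 - m) * δ = m * (f q - f p) := ⟨_, mul_div_cancel₀ _ (by linarith)⟩
  exact ofReal_mul_latticeSliceMeasure_le ν hC hCc hm₀ hm_half hbox Real.exp_neg_one_lt_half.le
    hsmall.le (hCc.inter_right (isClosed_Ici.preimage f.continuous))
    (smul_inter_Ici_add_smul_subset hC (f : (ι → ℝ) × F →ₗ[ℝ] ℝ) hp_min hq_max hm₀ hm₁ hδ y hv)
    (hdepth f hf p hp hp_min q hq hq_max m δ hm₀ (by linarith) hδ)

theorem main_linear_threshold_general (hC : Convex ℝ C) (hCc : IsCompact C) {z₀ : ι → ℝ} {k : ℝ}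
    (hk : 1 / 2 ≤ k) (hbox : Metric.closedBall z₀ k ⊆ Prod.fst '' C) :
    ∃ y ∈ C, (∃ z : ι → ℤ, y.1 = fun i => (z i : ℝ)) ∧
      ∀ (f : (ι → ℝ) × F →L[ℝ] ℝ) (c : ℝ), f ≠ 0 → c ≤ f y →
        ENNReal.ofReal (1 / Real.exp 1 - 3 * (Fintype.card ι + Module.finrank ℝ F) / (2 * k)) *
            latticeSliceMeasure ν C ≤
          latticeSliceMeasure ν (C ∩ f ⁻¹' Ici c) := by
  have hk₀ : 0 < k := by linarith
  have hbox_half : Metric.closedBall ((2 * k)⁻¹ • z₀) (1 / 2) ⊆ Prod.fst '' ((2 * k)⁻¹ • C) := by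
    have hradius : ‖(2 * k)⁻¹‖ * k = 1 / 2 := by
      rw [Real.norm_of_nonneg (by positivity)]
      field_simp
    rw [image_smul_comm Prod.fst _ _ fun _ => rfl, ← hradius, ← smul_closedBall _ _ hk₀.le]
    exact smul_set_mono hbox
  obtain ⟨y, hy, hz, hdepth⟩ := exists_forall_latticeSliceMeasure_inter_le ν hC hCc
    (by positivity) (inv_le_one_of_one_le₀ (by linarith)) hbox_half
  refine ⟨y, hy, hz, fun f c hf hc => ?_⟩
  calc _ = ENNReal.ofReal (Real.exp (-1) - 3 * Module.finrank ℝ ((ι → ℝ) × F) * (2 * k)⁻¹) *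
        latticeSliceMeasure ν C := by
        rw [Module.finrank_prod, Module.finrank_fintype_fun_eq_card, Real.exp_neg, one_div,
          Nat.cast_add, div_eq_mul_inv]
    _ ≤ latticeSliceMeasure ν (C ∩ f ⁻¹' Ici (f y)) := hdepth f hf
    _ ≤ latticeSliceMeasure ν (C ∩ f ⁻¹' Ici c) := latticeSliceMeasure_mono ν <| by
        gcongr

end Threshold

section Pairing

variable {n d : ℕ}

/-- The linear functional `dotP n d a`, whose superlevel sets are the halfspaces with inner
normal `a`. -/
noncomputable def dotPFunctional (a : (Fin n → ℝ) × (Fin d → ℝ)) :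
    (Fin n → ℝ) × (Fin d → ℝ) →L[ℝ] ℝ :=
  LinearMap.toContinuousLinearMap
    { toFun := dotP n d a
      map_add' := fun x y => by
        simp only [dotP, Prod.fst_add, Prod.snd_add, Pi.add_apply, mul_add, Finset.sum_add_distrib]
        ring
      map_smul' := fun r x => by
        simp only [dotP, Prod.smul_fst, Prod.smul_snd, Pi.smul_apply, smul_eq_mul, mul_left_comm,
          mul_add, Finset.mul_sum, RingHom.id_apply] }

theorem dotPFunctional_ne_zero {a : (Fin n → ℝ) × (Fin d → ℝ)} (ha : a ≠ 0) :
    dotPFunctional a ≠ 0 := by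
  intro hzero
  have hself : (∑ i, a.1 i * a.1 i) + ∑ j, a.2 j * a.2 j = 0 := DFunLike.congr_fun hzero a
  rw [add_eq_zero_iff_of_nonneg (Finset.sum_nonneg fun i _ => mul_self_nonneg _)
    (Finset.sum_nonneg fun j _ => mul_self_nonneg _)] at hself
  simp only [Finset.sum_eq_zero_iff_of_nonneg fun _ _ => mul_self_nonneg _, Finset.mem_univ,
    forall_const, mul_self_eq_zero] at hself
  exact ha (Prod.ext (funext hself.1) (funext hself.2))

theorem mixVol_inter_mixLattice (A : Set ((Fin n → ℝ) × (Fin d → ℝ))) :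
    mixVol n d (A ∩ mixLattice n d) = latticeSliceMeasure volume A :=
  tsum_congr fun z => congrArg volume <|
    Set.ext fun _ => and_iff_left (show _ ∈ mixLattice n d from ⟨z, rfl⟩)

theorem mixVol_inter_mixLattice_inter (A : Set ((Fin n → ℝ) × (Fin d → ℝ)))
    (a : (Fin n → ℝ) × (Fin d → ℝ)) (c : ℝ) :
    mixVol n d ((A ∩ mixLattice n d) ∩ {u | c ≤ dotP n d a u}) =
      latticeSliceMeasure volume (A ∩ dotPFunctional a ⁻¹' Ici c) := by
  rw [inter_right_comm, mixVol_inter_mixLattice]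
  rfl

theorem half_le_of_three_mul_exp_mul_le {k : ℝ} (hn : 1 ≤ n)
    (hk : 3 * Real.exp 1 / 2 * (n + d) ≤ k) : 1 / 2 ≤ k := by
  have hnd : (1 : ℝ) ≤ n + d := by exact_mod_cast hn.trans (n.le_add_right d)
  nlinarith [Real.add_one_le_exp 1, hnd]

end Pairing

/-- Main theorem: linear threshold for mixed-integer halfspace depth.  `ℝⁿ = Fin n → ℝ`
carries the sup norm, so `Metric.closedBall z₀ k` is the translate `z₀ + k·B∞ⁿ`. -/
theorem main_linear_threshold (n d : ℕ) (hn : 1 ≤ n) (hd : 1 ≤ d)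
    (C : Set ((Fin n → ℝ) × (Fin d → ℝ)))
    (hconv : Convex ℝ C) (hcomp : IsCompact C) (hint : (interior C).Nonempty)
    (z₀ : Fin n → ℝ) (k : ℝ)
    (hk : 3 * Real.exp 1 / 2 * (n + d) ≤ k)
    (hbox : Metric.closedBall z₀ k ⊆ Prod.fst '' C) :
    ∃ ystar ∈ C ∩ mixLattice n d,
      ∀ (a : (Fin n → ℝ) × (Fin d → ℝ)) (c : ℝ), a ≠ 0 → c ≤ dotP n d a ystar →
        ENNReal.ofReal (1 / Real.exp 1 - 3 * (n + d) / (2 * k)) *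
            mixVol n d (C ∩ mixLattice n d) ≤
          mixVol n d ((C ∩ mixLattice n d) ∩ {u | c ≤ dotP n d a u}) := by
  obtain ⟨y, hy, hyz, h⟩ := main_linear_threshold_general volume hconv hcomp
    (half_le_of_three_mul_exp_mul_le hn hk) hbox
  exact ⟨y, ⟨hy, hyz⟩, fun a c ha hc => by
    simpa only [mixVol_inter_mixLattice, mixVol_inter_mixLattice_inter, Fintype.card_fin,
      Module.finrank_fin_fun] using h (dotPFunctional a) c (dotPFunctional_ne_zero ha) hc⟩
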